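/- arXiv:1503.01588 — 4 statements merged into one kernel-verified Lean document; each statement's English description precedes it below -/
import Mathlib

section
/- Fix n ≥ 1, a nonempty finite message space M, a one-round protocol Π : (Fin n → M) → Bool, t : ℕ, and ε ∈ ℝ with 0 < ε ≤ 1. Suppose that for every b : Bool, the probability over a uniformly random r : Fin n → M that r ∈ Robust^Π(b,t) is at least ε. Then for every natural number ℓ' with (ℓ' : ℝ) ≥ 8·n/ε², there exists a matrix Mat : Fin ℓ' → Fin n → M such that for every b : Bool, the probability over a uniformly random a : Fin n → Fin ℓ' that the vector (fun i => Mat (a i) i) lies in Robust^Π(b,t) is at least ε/2. -/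
/-- The probability that a uniformly random element of a finite type satisfies `P`. -/
noncomputable def Pr {α : Type*} [Fintype α] (P : α → Prop) : ℝ :=
  letI := Classical.decPred P
  ((Finset.univ.filter P).card : ℝ) / Fintype.card α

/-- `RobustSet proto b t` is the set of message vectors `r` such that every vector within
Hamming distance `t` of `r` (including `r` itself) yields outcome `b`. -/
def RobustSet {ι M : Type*} [Fintype ι] [DecidableEq M]
    (proto : (ι → M) → Bool) (b : Bool) (t : ℕ) : Set (ι → M) :=
  {r | ∀ r', hammingDist r r' ≤ t → proto r' = b}

/-- `proto` is `ε`-secure against `t` strong adaptive corruptions: for every adversary `A`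
changing at most `t` coordinates of the honest messages, every outcome occurs with
probability at least `ε` over uniform honest messages. -/
def StrongSecure {ι M : Type*} [Fintype ι] [DecidableEq ι] [Fintype M] [DecidableEq M]
    (proto : (ι → M) → Bool) (t : ℕ) (ε : ℝ) : Prop :=
  ∀ A : (ι → M) → (ι → M), (∀ r, hammingDist r (A r) ≤ t) →
    ∀ b : Bool, ε ≤ Pr (fun r => proto (A r) = b)

/-!
Second moment method for a uniformly random matrix `A`. Overwriting the entries of `A` at the
positions selected by an index vector `a` with fresh random messages does not change the
distribution of `A`; hence two index vectors that agree nowhere read independent message vectors.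
Two random index vectors agree somewhere with probability at most `n / ℓ'`, so the average over `a`
of a function of the vector read off at `a` has variance at most `n / ℓ'` times the variance of that
function, which is at most `1 / 4` for an indicator. Summing over the outcomes, some matrix brings
the averages of all indicators within `ε / 2` of their expectations.
-/

open Finset
open Fintype (card)
open scoped BigOperators

section Uniform

variable {α : Type*} [Fintype α]

lemma Pr_eq_expect (P : α → Prop) [DecidablePred P] :
    Pr P = 𝔼 x, if P x then (1 : ℝ) else 0 := by
  rw [Fintype.expect_eq_sum_div_card, sum_boole, Pr]
  congr!

lemma Pr_exists_le_sum {ι : Type*} [Fintype ι] (P : ι → α → Prop) :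
    Pr (fun x => ∃ i, P i x) ≤ ∑ i, Pr (P i) := by
  classical
  simp only [Pr_eq_expect, ← expect_sum_comm]
  refine expect_le_expect fun x _ => ?_
  split_ifs with hx
  · obtain ⟨i, hi⟩ := hx
    calc (1 : ℝ) = if P i x then 1 else 0 := (if_pos hi).symm
      _ ≤ ∑ j, if P j x then 1 else 0 :=
        single_le_sum (f := fun j => if P j x then (1 : ℝ) else 0)
          (fun j _ => by positivity) (mem_univ i)
  · positivity

lemma expect_sq_sub_expect_le_one_div_four [Nonempty α] {f : α → ℝ} (h0 : ∀ x, 0 ≤ f x)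
    (h1 : ∀ x, f x ≤ 1) : 𝔼 x, (f x - 𝔼 y, f y) ^ 2 ≤ 1 / 4 := by
  set p := 𝔼 y, f y with hp
  calc 𝔼 x, (f x - p) ^ 2 ≤ 𝔼 x, (f x * (1 - 2 * p) + p ^ 2) :=
        expect_le_expect fun x _ => by
          have hsq : f x ^ 2 ≤ f x := pow_le_of_le_one (h0 x) (h1 x) two_ne_zero
          linarith
    _ = p * (1 - 2 * p) + p ^ 2 := by
        rw [expect_add_distrib, ← expect_mul, Fintype.expect_const, hp]
    _ ≤ 1 / 4 := by linarith [sq_nonneg (p - 1 / 2)]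

end Uniform

section Collision

variable {ι κ : Type*} [Fintype ι] [DecidableEq ι] [Fintype κ]

lemma Pr_apply_eq (i : ι) (c : κ) : Pr (fun a : ι → κ => a i = c) = 1 / card κ := by
  classical
  have : Nonempty κ := ⟨c⟩
  have hκ : (card κ : ℝ) ≠ 0 := by simp
  have hcard : #{a : ι → κ | a i = c} = card κ ^ (card ι - 1) := by
    simpa using Fintype.card_filter_piFinset_const_eq_of_mem (univ : Finset κ) i (mem_univ c)
  have hι : card ι - 1 + 1 = card ι := Nat.sub_add_cancel (Fintype.card_pos_iff.2 ⟨i⟩)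
  rw [Pr_eq_expect, Fintype.expect_eq_sum_div_card, sum_boole, hcard, Fintype.card_fun, ← hι]
  push_cast
  rw [pow_succ]
  field_simp

lemma Pr_exists_apply_eq_le (a : ι → κ) :
    Pr (fun a' : ι → κ => ∃ i, a i = a' i) ≤ card ι / card κ :=
  calc Pr (fun a' : ι → κ => ∃ i, a i = a' i)
      ≤ ∑ i, Pr (fun a' : ι → κ => a' i = a i) := by
        simpa only [eq_comm] using Pr_exists_le_sum fun i (a' : ι → κ) => a' i = a i
    _ = card ι / card κ := by simp [Pr_apply_eq, div_eq_mul_inv]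

end Collision

section ReadOff

variable {ι κ : Type*} {M : ι → Type*}

/-- The message vector that the index vector `a` selects from the matrix `A`: its `i`-th message is
the entry of column `i` in row `a i`. Columns may have different alphabets. -/
def readOff (A : κ → ∀ i, M i) (a : ι → κ) : ∀ i, M i := fun i => A (a i) i

/-- The matrix `A` with its entries at the positions selected by `a` replaced by the messages `r`;
used to resample these entries independently of the others. -/
def overwrite [DecidableEq κ] (A : κ → ∀ i, M i) (a : ι → κ) (r : ∀ i, M i) : κ → ∀ i, M i :=
  fun k i => if k = a i then r i else A k i

section Overwrite

variable [DecidableEq κ]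

lemma readOff_overwrite_self (A : κ → ∀ i, M i) (a : ι → κ) (r : ∀ i, M i) :
    readOff (overwrite A a r) a = r := by
  funext i
  simp [readOff, overwrite]

lemma readOff_overwrite_of_forall_ne (A : κ → ∀ i, M i) {a a' : ι → κ} (h : ∀ i, a i ≠ a' i)
    (r : ∀ i, M i) : readOff (overwrite A a r) a' = readOff A a' := by
  funext i
  simp [readOff, overwrite, (h i).symm]

lemma overwrite_overwrite_readOff (A : κ → ∀ i, M i) (a : ι → κ) (r : ∀ i, M i) :
    overwrite (overwrite A a r) a (readOff A a) = A := by
  funext k i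
  by_cases hk : k = a i <;> simp [readOff, overwrite, hk]

/-- Exchanging the messages `r` with the entries of `A` at the positions selected by `a`. -/
def overwriteEquiv (a : ι → κ) :
    (κ → ∀ i, M i) × (∀ i, M i) ≃ (κ → ∀ i, M i) × (∀ i, M i) :=
  Function.Involutive.toPerm (fun x => (overwrite x.1 a x.2, readOff x.1 a)) fun x =>
    Prod.ext (overwrite_overwrite_readOff x.1 a x.2) (readOff_overwrite_self x.1 a x.2)

end Overwrite

variable [Fintype ι] [DecidableEq ι] [Fintype κ] [∀ i, Fintype (M i)] [∀ i, Nonempty (M i)]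

section SecondMoment

variable [DecidableEq κ]

lemma expect_expect_overwrite (F : (κ → ∀ i, M i) → ℝ) (a : ι → κ) :
    𝔼 A, 𝔼 r, F (overwrite A a r) = 𝔼 A, F A :=
  calc 𝔼 A, 𝔼 r, F (overwrite A a r)
      = 𝔼 x : (κ → ∀ i, M i) × (∀ i, M i), F (overwrite x.1 a x.2) := by
        rw [← univ_product_univ, expect_product]
    _ = 𝔼 x : (κ → ∀ i, M i) × (∀ i, M i), F x.1 :=
        Fintype.expect_equiv (overwriteEquiv a) _ _ fun _ => rfl
    _ = 𝔼 A, F A := by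
        rw [← univ_product_univ, expect_product]
        simp only [Fintype.expect_const]

lemma expect_readOff (f : (∀ i, M i) → ℝ) (a : ι → κ) :
    𝔼 A : κ → ∀ i, M i, f (readOff A a) = 𝔼 r, f r := by
  rw [← expect_expect_overwrite _ a]
  simp only [readOff_overwrite_self, Fintype.expect_const]

lemma expect_readOff_mul_readOff_of_forall_ne (f g : (∀ i, M i) → ℝ) {a a' : ι → κ}
    (h : ∀ i, a i ≠ a' i) :
    𝔼 A : κ → ∀ i, M i, f (readOff A a) * g (readOff A a') = (𝔼 r, f r) * 𝔼 r, g r := by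
  rw [← expect_expect_overwrite _ a]
  simp only [readOff_overwrite_self, readOff_overwrite_of_forall_ne _ h, ← expect_mul, ← mul_expect,
    expect_readOff]

lemma expect_readOff_mul_readOff_le (g : (∀ i, M i) → ℝ) (a a' : ι → κ) :
    𝔼 A : κ → ∀ i, M i, g (readOff A a) * g (readOff A a') ≤ 𝔼 r, g r ^ 2 :=
  calc 𝔼 A : κ → ∀ i, M i, g (readOff A a) * g (readOff A a')
      ≤ 𝔼 A : κ → ∀ i, M i, (g (readOff A a) ^ 2 + g (readOff A a') ^ 2) / 2 :=
        expect_le_expect fun A _ => by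
          linarith [two_mul_le_add_sq (g (readOff A a)) (g (readOff A a'))]
    _ = 𝔼 r, g r ^ 2 := by
        rw [← expect_div, expect_add_distrib, expect_readOff (fun r => g r ^ 2) a,
          expect_readOff (fun r => g r ^ 2) a', add_self_div_two]

lemma expect_sq_expect_readOff_le [Nonempty κ] {g : (∀ i, M i) → ℝ} (hg : 𝔼 r, g r = 0) :
    𝔼 A : κ → ∀ i, M i, (𝔼 a : ι → κ, g (readOff A a)) ^ 2
      ≤ card ι / card κ * 𝔼 r, g r ^ 2 := by
  have hpair (a a' : ι → κ) : 𝔼 A : κ → ∀ i, M i, g (readOff A a) * g (readOff A a')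
      ≤ (if ∃ i, a i = a' i then 1 else 0) * 𝔼 r, g r ^ 2 := by
    split_ifs with h
    · simpa only [one_mul] using expect_readOff_mul_readOff_le g a a'
    · push Not at h
      rw [expect_readOff_mul_readOff_of_forall_ne g g h, hg, zero_mul, zero_mul]
  calc 𝔼 A : κ → ∀ i, M i, (𝔼 a : ι → κ, g (readOff A a)) ^ 2
      = 𝔼 a : ι → κ, 𝔼 a' : ι → κ, 𝔼 A : κ → ∀ i, M i, g (readOff A a) * g (readOff A a') := by
        simp only [sq, Fintype.expect_mul_expect]
        rw [expect_comm]
        exact expect_congr rfl fun a _ => expect_comm _ _ _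
    _ ≤ 𝔼 a : ι → κ, 𝔼 a' : ι → κ, (if ∃ i, a i = a' i then 1 else 0) * 𝔼 r, g r ^ 2 :=
        expect_le_expect fun a _ => expect_le_expect fun a' _ => hpair a a'
    _ = 𝔼 a : ι → κ, Pr (fun a' : ι → κ => ∃ i, a i = a' i) * 𝔼 r, g r ^ 2 := by
        simp only [Pr_eq_expect, expect_mul]
    _ ≤ card ι / card κ * 𝔼 r, g r ^ 2 :=
        expect_le univ_nonempty fun a _ =>
          mul_le_mul_of_nonneg_right (Pr_exists_apply_eq_le a)
            (expect_nonneg fun r _ => sq_nonneg (g r))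

lemma expect_sq_expect_readOff_sub_expect_le [Nonempty κ] (f : (∀ i, M i) → ℝ) :
    𝔼 A : κ → ∀ i, M i, ((𝔼 a : ι → κ, f (readOff A a)) - 𝔼 r, f r) ^ 2
      ≤ card ι / card κ * 𝔼 r, (f r - 𝔼 s, f s) ^ 2 := by
  have hmean : 𝔼 r, (f r - 𝔼 s, f s) = 0 := by
    rw [expect_sub_distrib, Fintype.expect_const, sub_self]
  simpa only [expect_sub_distrib, Fintype.expect_const] using
    expect_sq_expect_readOff_le (κ := κ) hmean

end SecondMoment

variable [Nonempty κ]

lemma exists_forall_abs_expect_readOff_sub_expect_le {β : Type*} [Fintype β]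
    (f : β → (∀ i, M i) → ℝ) {δ : ℝ} (hδ : 0 ≤ δ)
    (h : card ι * ∑ b, 𝔼 r, (f b r - 𝔼 s, f b s) ^ 2 ≤ δ ^ 2 * card κ) :
    ∃ A : κ → ∀ i, M i, ∀ b, |(𝔼 a : ι → κ, f b (readOff A a)) - 𝔼 r, f b r| ≤ δ := by
  classical
  have hsum : 𝔼 A : κ → ∀ i, M i,
      ∑ b, ((𝔼 a : ι → κ, f b (readOff A a)) - 𝔼 r, f b r) ^ 2 ≤ δ ^ 2 := by
    rw [expect_sum_comm]
    calc ∑ b, 𝔼 A : κ → ∀ i, M i, ((𝔼 a : ι → κ, f b (readOff A a)) - 𝔼 r, f b r) ^ 2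
        ≤ ∑ b, card ι / card κ * 𝔼 r, (f b r - 𝔼 s, f b s) ^ 2 :=
          sum_le_sum fun b _ => expect_sq_expect_readOff_sub_expect_le (f b)
      _ = card ι * (∑ b, 𝔼 r, (f b r - 𝔼 s, f b s) ^ 2) / card κ := by
          rw [← mul_sum, div_mul_eq_mul_div]
      _ ≤ δ ^ 2 := div_le_of_le_mul₀ (by positivity) (by positivity) h
  obtain ⟨A, -, hA⟩ := exists_le_of_expect_le univ_nonempty hsum
  refine ⟨A, fun b => abs_le_of_sq_le_sq ?_ hδ⟩
  exact (single_le_sum (f := fun b => ((𝔼 a : ι → κ, f b (readOff A a)) - 𝔼 r, f b r) ^ 2)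
    (fun c _ => sq_nonneg _) (mem_univ b)).trans hA

theorem stmt3_general {β : Type*} [Fintype β] (S : β → Set (∀ i, M i)) {δ : ℝ} (hδ : 0 ≤ δ)
    (h : card β * card ι ≤ 4 * δ ^ 2 * card κ) :
    ∃ A : κ → ∀ i, M i, ∀ b,
      |Pr (fun a : ι → κ => (fun i => A (a i) i) ∈ S b) - Pr (fun r => r ∈ S b)| ≤ δ := by
  classical
  let f (b : β) (r : ∀ i, M i) : ℝ := if r ∈ S b then 1 else 0
  have hvar (b : β) : 𝔼 r, (f b r - 𝔼 s, f b s) ^ 2 ≤ 1 / 4 :=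
    expect_sq_sub_expect_le_one_div_four (fun r => by positivity)
      fun r => ite_le_one le_rfl zero_le_one
  have hsum : ∑ b, 𝔼 r, (f b r - 𝔼 s, f b s) ^ 2 ≤ card β * (1 / 4) := by
    simpa using sum_le_card_nsmul univ _ _ fun b _ => hvar b
  simp only [Pr_eq_expect]
  refine exists_forall_abs_expect_readOff_sub_expect_le f hδ ?_
  calc (card ι : ℝ) * ∑ b, 𝔼 r, (f b r - 𝔼 s, f b s) ^ 2
      ≤ card ι * (card β * (1 / 4)) := by gcongr
    _ ≤ δ ^ 2 * card κ := by linarith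

end ReadOff

/-- If both robust sets of `proto` have probability at least `ε`, then for
any `ℓ' ≥ 8n/ε²` there is a matrix `Mat` such that for each `b`, a uniformly random index
vector `a` reads off a `b`-robust message vector with probability at least `ε/2`. -/
theorem stmt3 {n : ℕ} (hn : 1 ≤ n) {M : Type*} [Fintype M] [Nonempty M] [DecidableEq M]
    (proto : (Fin n → M) → Bool) (t : ℕ) {ε : ℝ} (hε0 : 0 < ε) (hε1 : ε ≤ 1)
    (h : ∀ b : Bool, ε ≤ Pr (fun r : Fin n → M => r ∈ RobustSet proto b t))
    (ℓ' : ℕ) (hl : (8 * n : ℝ) / ε ^ 2 ≤ ℓ') :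
    ∃ Mat : Fin ℓ' → Fin n → M, ∀ b : Bool,
      ε / 2 ≤ Pr (fun a : Fin n → Fin ℓ' =>
        (fun i => Mat (a i) i) ∈ RobustSet proto b t) := by
  have hn' : (0 : ℝ) < n := Nat.cast_pos.2 hn
  have hl0 : (0 : ℝ) < ℓ' := lt_of_lt_of_le (by positivity) hl
  have : Nonempty (Fin ℓ') := Fin.pos_iff_nonempty.1 (Nat.cast_pos.1 hl0)
  have hcard : 2 * (n : ℝ) ≤ 4 * (ε / 2) ^ 2 * ℓ' := by
    rw [div_le_iff₀ (by positivity)] at hl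
    linarith
  obtain ⟨Mat, hMat⟩ := stmt3_general (κ := Fin ℓ') (fun b => RobustSet proto b t)
    (half_pos hε0).le (by simpa using hcard)
  exact ⟨Mat, fun b => by linarith [h b, neg_le_of_abs_le (hMat b)]⟩
end

section
/- Let δ > 0 and ε ∈ ℝ with 0 < ε < 1. Let M : ℕ → Type be a family of nonempty finite message spaces, Π : ∀ n, (Fin n → M n) → Bool a family of one-round protocols, and t : ℕ → ℕ, and suppose that for every n ≥ 1, Π n is ε-secure against t n strong adaptive corruptions. Then there exist a constant ε' > 0, a constant C > 0, a function ℓ' : ℕ → ℕ with 1 ≤ ℓ' n and (ℓ' n : ℝ) ≤ 2^(C·(Real.log n)^(1+δ)) for all n ≥ 2, and a family of one-round protocols Π' : ∀ n, (Fin n → Fin (ℓ' n)) → Bool such that for every n ≥ 2, Π' n is ε'-secure against t n strong adaptive corruptions. (In particular each player in Π' n sends a message of length O((log n)^(1+δ)) bits.) -/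
/-!
Draw a message `m (i, a)` for every player `i` and every letter `a` of an alphabet `L`, and let the
players send letters `s i`, which stand for the messages `m (i, s i)`. Reading letters as messages
does not increase Hamming distances, so security only asks that the vector `m (·, s ·)` hits the
robust set of each outcome with constant probability over `s`.

One bit suffices. Let `σ` permute `L` without fixed points. For each `s`, the vectors `m (·, s ·)`
and `m (·, σ (s ·))` read disjoint parts of `m`, so with probability at least `ε ^ 2` over `m` they
lie in the robust sets of `true` and of `false`, respectively. By averaging, some `m` has this
property for at least a fraction `ε ^ 2` of all `s`. Since `σ ∘ s` is uniform when `s` is, this `m`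
hits each robust set with probability at least `ε ^ 2`.
-/

section UniformProbability

open scoped BigOperators

variable {α β γ M : Type*} [Fintype α] [Fintype β]

lemma pr_mono {P Q : α → Prop} (h : ∀ a, P a → Q a) : Pr P ≤ Pr Q := by
  classical
  unfold Pr
  gcongr with a
  exact h a

lemma pr_true [Nonempty α] : Pr (fun _ : α => True) = 1 := by
  simp [Pr]

lemma pr_comp_equiv (e : α ≃ β) (P : β → Prop) : Pr (fun a => P (e a)) = Pr P := by
  classical
  have card_filter : (Finset.univ.filter fun a => P (e a)).card = (Finset.univ.filter P).card :=
    Finset.card_equiv e (by simp)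
  unfold Pr
  convert congrArg₂ (fun k l : ℕ => (k : ℝ) / l) card_filter (Fintype.card_congr e)

lemma pr_prod (P : α → Prop) (Q : β → Prop) :
    Pr (fun x : α × β => P x.1 ∧ Q x.2) = Pr P * Pr Q := by
  classical
  have card_filter : (Finset.univ.filter fun x : α × β => P x.1 ∧ Q x.2).card =
      (Finset.univ.filter P).card * (Finset.univ.filter Q).card := by
    rw [← Finset.univ_product_univ, Finset.filter_product, Finset.card_product]
  unfold Pr
  rw [div_mul_div_comm, ← Nat.cast_mul, ← Nat.cast_mul, ← card_filter, ← Fintype.card_prod]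
  congr!

lemma pr_eq_expect (P : α → Prop) [DecidablePred P] :
    Pr P = 𝔼 a, if P a then (1 : ℝ) else 0 := by
  rw [Fintype.expect_eq_sum_div_card, ← Finset.natCast_card_filter]
  unfold Pr
  congr!

lemma exists_le_pr_of_forall_le_pr [Nonempty α] [Nonempty β] {P : α → β → Prop} {c : ℝ}
    (h : ∀ b, c ≤ Pr (fun a => P a b)) : ∃ a, c ≤ Pr (P a) := by
  classical
  have mean_eq : 𝔼 a, Pr (P a) = 𝔼 b, Pr (fun a => P a b) := by
    simp only [pr_eq_expect]
    exact Finset.expect_comm ..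
  have le_mean : c ≤ 𝔼 a, Pr (P a) :=
    mean_eq ▸ Finset.le_expect Finset.univ_nonempty fun b _ => h b
  obtain ⟨a, -, ha⟩ := Finset.exists_le_of_le_expect Finset.univ_nonempty le_mean
  exact ⟨a, ha⟩

variable [Fintype γ] [DecidableEq α] [DecidableEq β] [DecidableEq γ] [Fintype M]

lemma pr_sum_arrow (P : (α → M) → Prop) (Q : (β → M) → Prop) :
    Pr (fun x : α ⊕ β → M => P (x ∘ Sum.inl) ∧ Q (x ∘ Sum.inr)) = Pr P * Pr Q := by
  rw [← pr_prod]
  exact pr_comp_equiv (Equiv.sumArrowEquivProdArrow α β M) fun x => P x.1 ∧ Q x.2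

variable [Nonempty M]

lemma pr_comp_injective {g : α → β} (hg : g.Injective) (P : (α → M) → Prop) :
    Pr (fun x : β → M => P (x ∘ g)) = Pr P := by
  classical
  let e : α ⊕ ↥(Set.range g)ᶜ ≃ β :=
    ((Equiv.ofInjective g hg).sumCongr (Equiv.refl _)).trans (Equiv.Set.sumCompl _)
  calc Pr (fun x : β → M => P (x ∘ g))
      = Pr (fun x : α ⊕ ↥(Set.range g)ᶜ → M => P (x ∘ Sum.inl) ∧ True) := by
        simp only [and_true]
        exact pr_comp_equiv (e.arrowCongr (Equiv.refl M)).symm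
          fun x : α ⊕ ↥(Set.range g)ᶜ → M => P (x ∘ Sum.inl)
    _ = Pr P := by rw [pr_sum_arrow P fun _ => True, pr_true, mul_one]

lemma pr_comp_and_comp {f : α → γ} {g : β → γ} (h : (Sum.elim f g).Injective)
    (P : (α → M) → Prop) (Q : (β → M) → Prop) :
    Pr (fun x : γ → M => P (x ∘ f) ∧ Q (x ∘ g)) = Pr P * Pr Q := by
  rw [← pr_sum_arrow]
  exact pr_comp_injective h fun x => P (x ∘ Sum.inl) ∧ Q (x ∘ Sum.inr)

end UniformProbability

section Sampling

variable {ι L M : Type*} [Fintype ι]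

lemma comp_mem_robustSet [DecidableEq L] [DecidableEq M] (m : ι × L → M)
    {proto : (ι → M) → Bool} {b : Bool} {t : ℕ} {s : ι → L}
    (hs : (fun i => m (i, s i)) ∈ RobustSet proto b t) :
    s ∈ RobustSet (fun s : ι → L => proto fun i => m (i, s i)) b t :=
  fun _ hs' => hs _ ((hammingDist_comp_le_hammingDist fun i a => m (i, a)).trans hs')

variable [DecidableEq ι] [Fintype M]

lemma exists_pr_mul_pr_le_pr_sample [Fintype L] [Nonempty L] [Nonempty M]
    {σ : Equiv.Perm L} (hσ : ∀ a, σ a ≠ a) (S T : (ι → M) → Prop) :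
    ∃ m : ι × L → M,
      Pr S * Pr T ≤ Pr (fun s : ι → L => S fun i => m (i, s i)) ∧
      Pr S * Pr T ≤ Pr (fun s : ι → L => T fun i => m (i, s i)) := by
  classical
  have disjoint_reads (s : ι → L) :
      (Sum.elim (fun i => (i, s i)) fun i => (i, σ (s i))).Injective := by
    have ne_of_ne (i j : ι) : (i, s i) ≠ (j, σ (s j)) := by
      intro h
      obtain ⟨rfl, h⟩ := Prod.ext_iff.mp h
      exact hσ _ h.symm
    refine Function.Injective.sumElim ?_ ?_ ne_of_ne <;>
      exact fun _ _ h => congrArg Prod.fst h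
  obtain ⟨m, hm⟩ := exists_le_pr_of_forall_le_pr fun s : ι → L =>
    (pr_comp_and_comp (disjoint_reads s) S T).ge
  refine ⟨m, hm.trans (pr_mono fun s hs => hs.1), ?_⟩
  calc Pr S * Pr T
      ≤ Pr (fun s : ι → L => T fun i => m (i, σ (s i))) := hm.trans (pr_mono fun s hs => hs.2)
    _ = Pr (fun s : ι → L => T fun i => m (i, s i)) :=
      pr_comp_equiv ((Equiv.refl ι).arrowCongr σ) fun s => T fun i => m (i, s i)

variable [DecidableEq M]

lemma strongSecure_iff_le_pr_robustSet {proto : (ι → M) → Bool} {t : ℕ} {ε : ℝ} :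
    StrongSecure proto t ε ↔ ∀ b, ε ≤ Pr (fun r => r ∈ RobustSet proto b t) := by
  refine ⟨fun h b => ?_, fun h A hA b => (h b).trans (pr_mono fun r hr => hr _ (hA r))⟩
  -- The best adversary against outcome `b` leaves `RobustSet proto b t` alone and fools all else.
  have exists_attack (r : ι → M) :
      ∃ r', hammingDist r r' ≤ t ∧ (proto r' = b → r ∈ RobustSet proto b t) := by
    by_cases hr : r ∈ RobustSet proto b t
    · exact ⟨r, by simp, fun _ => hr⟩
    · obtain ⟨r', hdist, hne⟩ : ∃ r', hammingDist r r' ≤ t ∧ proto r' ≠ b := by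
        simpa [RobustSet] using hr
      exact ⟨r', hdist, fun heq => absurd heq hne⟩
  choose A hdist hrobust using exists_attack
  exact (h A hdist b).trans (pr_mono hrobust)

lemma StrongSecure.exists_sample [Fintype L] [DecidableEq L] [Nonempty L] [Nonempty M]
    {proto : (ι → M) → Bool} {t : ℕ} {ε : ℝ} (h : StrongSecure proto t ε) (hε : 0 ≤ ε)
    {σ : Equiv.Perm L} (hσ : ∀ a, σ a ≠ a) :
    ∃ m : ι × L → M,
      StrongSecure (fun s : ι → L => proto fun i => m (i, s i)) t (ε ^ 2) := by
  have robust := strongSecure_iff_le_pr_robustSet.mp h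
  obtain ⟨m, htrue, hfalse⟩ := exists_pr_mul_pr_le_pr_sample hσ
    (· ∈ RobustSet proto true t) (· ∈ RobustSet proto false t)
  have sq_le : ε ^ 2 ≤ Pr (· ∈ RobustSet proto true t) * Pr (· ∈ RobustSet proto false t) :=
    sq ε ▸ mul_le_mul (robust true) (robust false) hε (hε.trans (robust true))
  refine ⟨m, strongSecure_iff_le_pr_robustSet.mpr fun b => sq_le.trans ?_⟩
  cases b
  · exact hfalse.trans (pr_mono fun _ => comp_mem_robustSet m)
  · exact htrue.trans (pr_mono fun _ => comp_mem_robustSet m)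

end Sampling

lemma two_le_two_rpow_inv_mul_log_rpow {p x : ℝ} (hp : 0 ≤ p) (hx : 2 ≤ x) :
    (2 : ℝ) ≤ 2 ^ ((Real.log 2 ^ p)⁻¹ * Real.log x ^ p) := by
  have one_le_exponent : 1 ≤ (Real.log 2 ^ p)⁻¹ * Real.log x ^ p := by
    rw [one_le_inv_mul₀ (by positivity)]
    gcongr
  exact Real.self_le_rpow_of_one_le one_le_two one_le_exponent

theorem stmt4_general {ι M : Type*} [Fintype ι] [DecidableEq ι] [Fintype M] [Nonempty M]
    [DecidableEq M] {proto : (ι → M) → Bool} {t : ℕ} {ε : ℝ} (hε : 0 ≤ ε)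
    (hsec : StrongSecure proto t ε) :
    ∃ proto' : (ι → Fin 2) → Bool, StrongSecure proto' t (ε ^ 2) := by
  obtain ⟨m, hm⟩ := hsec.exists_sample hε (σ := Fin.revPerm (n := 2)) (by decide)
  exact ⟨fun s => proto fun i => m (i, s i), hm⟩

/-- Any family of one-round protocols that is `ε`-secure against `t n`
strong adaptive corruptions can be converted into a family of one-round protocols with
message alphabet of size `2^(O((log n)^(1+δ)))` (i.e. messages of `O((log n)^(1+δ))` bits)
which is `ε'`-secure against `t n` strong adaptive corruptions for some constant `ε' > 0`. -/
theorem stmt4 (δ : ℝ) (hδ : 0 < δ) {ε : ℝ} (hε0 : 0 < ε) (hε1 : ε < 1)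
    (M : ℕ → Type) [∀ n, Fintype (M n)] [∀ n, Nonempty (M n)] [∀ n, DecidableEq (M n)]
    (proto : ∀ n, (Fin n → M n) → Bool) (t : ℕ → ℕ)
    (hsec : ∀ n, 1 ≤ n → StrongSecure (proto n) (t n) ε) :
    ∃ ε' : ℝ, 0 < ε' ∧ ∃ C : ℝ, 0 < C ∧ ∃ ℓ' : ℕ → ℕ,
      (∀ n, 2 ≤ n → 1 ≤ ℓ' n ∧ (ℓ' n : ℝ) ≤ (2 : ℝ) ^ (C * Real.log n ^ (1 + δ))) ∧
      ∃ proto' : ∀ n, (Fin n → Fin (ℓ' n)) → Bool,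
        ∀ n, 2 ≤ n → StrongSecure (proto' n) (t n) ε' := by
  choose! proto' hproto' using fun n hn => stmt4_general hε0.le (hsec n hn)
  exact ⟨ε ^ 2, by positivity, (Real.log 2 ^ (1 + δ))⁻¹, by positivity, fun _ => 2,
    fun n hn => ⟨one_le_two, two_le_two_rpow_inv_mul_log_rpow (by positivity) (mod_cast hn)⟩,
    proto', fun n hn => hproto' n (one_le_two.trans hn)⟩
end

section
/- Fix n ≥ 1, s ≥ 1, a nonempty finite message space M, and a symmetric one-round protocol Π : (Fin (n + 2·s) → M) → Bool (identifying Fin (n + 2·s) with Fin n ⊕ Fin s ⊕ Fin s via concatenation). Define Π' : (Fin n → M) → Bool by Π' r = true if and only if for every r' : Fin s → M there exists r'' : Fin s → M with Π (r ++ r' ++ r'') = true. Suppose r : Fin n → M satisfies Π (r ++ q) = true for every q : Fin (2·s) → M. Then for every r̂ : Fin n → M with dist(r, r̂) ≤ s, it holds that Π' r̂ = true; that is, r ∈ Robust^{Π'}(true, s). -/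
/-- A one-round protocol is symmetric if its outcome is invariant under any permutation of
the players' messages. -/
def SymmetricProto {ι M : Type*} (proto : (ι → M) → Bool) : Prop :=
  ∀ (π : Equiv.Perm ι) (r : ι → M), proto (r ∘ π) = proto r

/-- Concatenation of a vector on `Fin n` with two vectors on `Fin s`, viewed as a vector on
`Fin (n + 2 * s)`. -/
def app3 {n s : ℕ} {M : Type*} (r : Fin n → M) (r' r'' : Fin s → M) :
    Fin (n + 2 * s) → M :=
  fun i => Fin.append r (Fin.append r' r'') (Fin.cast (by omega) i)

section

variable {α ι κ M : Type*}

theorem SymmetricProto.eq_of_comp_eq [Finite ι] {proto : (α → M) → Bool}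
    (hsym : SymmetricProto proto) {f g : ι → α} (hf : f.Injective) (hg : g.Injective)
    {r : ι → M} {b : Bool} (hfix : ∀ w, w ∘ f = r → proto w = b) {w : α → M} (hw : w ∘ g = r) :
    proto w = b := by
  obtain ⟨π, hπ⟩ := Equiv.Perm.exists_extending_pair f g hf hg
  have hπ' : π ∘ f = g := funext hπ
  rw [← hsym π w]
  exact hfix (w ∘ π) (by rw [Function.comp_assoc, hπ', hw])

theorem exists_sumElim_comp_eq_of_hammingDist_le [Fintype ι] [Fintype κ] [Nonempty M]
    [DecidableEq M] {r r' : ι → M} (h : hammingDist r r' ≤ Fintype.card κ) :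
    ∃ (p : κ → M) (g : ι ↪ ι ⊕ κ), Sum.elim r' p ∘ g = r := by
  have hcard : Fintype.card {i // ¬r i = r' i} ≤ Fintype.card κ := by
    rwa [Fintype.card_subtype]
  obtain ⟨f⟩ := Function.Embedding.nonempty_of_card_le hcard
  obtain ⟨p, hp⟩ : ∃ p : κ → M, ∀ d, p (f d) = r d :=
    ⟨Function.extend f (fun d ↦ r d) (fun _ ↦ Classical.arbitrary M), f.injective.extend_apply _ _⟩
  let e := Equiv.sumCompl (fun i ↦ r i = r' i)
  let g : {i // r i = r' i} ⊕ {i // ¬r i = r' i} ↪ ι ⊕ κ := (Function.Embedding.subtype _).sumMap f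
  have hg : Sum.elim r' p ∘ g = r ∘ e := by
    funext x
    rcases x with ⟨i, hi⟩ | d
    · exact hi.symm
    · exact hp d
  exact ⟨p, e.symm.toEmbedding.trans g, (e.comp_symm_eq _ _).2 hg⟩

theorem SymmetricProto.exists_forall_eq_of_hammingDist_le [Fintype ι] [Fintype κ] [Nonempty M]
    [DecidableEq M] {proto : (α → M) → Bool} (hsym : SymmetricProto proto)
    {f : ι → α} {g : ι ⊕ κ → α} (hf : f.Injective) (hg : g.Injective) {r r' : ι → M} {b : Bool}
    (hfix : ∀ w, w ∘ f = r → proto w = b) (h : hammingDist r r' ≤ Fintype.card κ) :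
    ∃ p : κ → M, ∀ w, w ∘ g = Sum.elim r' p → proto w = b := by
  obtain ⟨p, e, he⟩ := exists_sumElim_comp_eq_of_hammingDist_le h
  refine ⟨p, fun w hw ↦ hsym.eq_of_comp_eq hf (hg.comp e.injective) hfix ?_⟩
  rw [← Function.comp_assoc, hw, he]

end

section

variable {n s : ℕ} {M : Type*}

/-- The positions in `app3 r r' r''` of the entries of `r` and of `r''`: the players outside the
middle block, whose messages together must contain every entry of the original vector. -/
def app3OuterEmb (n s : ℕ) : Fin n ⊕ Fin s ↪ Fin (n + 2 * s) :=
  ((Function.Embedding.refl (Fin n)).sumMap (Fin.natAddEmb s)).trans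
    (finSumFinEquiv.trans (finCongr (by omega))).toEmbedding

theorem app3_comp_app3OuterEmb (r : Fin n → M) (r' r'' : Fin s → M) :
    app3 r r' r'' ∘ app3OuterEmb n s = Sum.elim r r'' := by
  funext x
  rcases x with i | j
  · exact Fin.append_left r (Fin.append r' r'') i
  · exact (Fin.append_right r (Fin.append r' r'') (Fin.natAdd s j)).trans
      (Fin.append_right r' r'' j)

theorem stmt11_general [Nonempty M] [DecidableEq M] {proto : (Fin (n + 2 * s) → M) → Bool}
    (hsym : SymmetricProto proto) {r : Fin n → M} {b : Bool}
    (hfix : ∀ q : Fin (2 * s) → M, proto (Fin.append r q) = b)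
    {rh : Fin n → M} (hd : hammingDist r rh ≤ s) :
    ∃ r'' : Fin s → M, ∀ r' : Fin s → M, proto (app3 rh r' r'') = b := by
  have hfix' (w : Fin (n + 2 * s) → M) (hw : w ∘ Fin.castAdd (2 * s) = r) : proto w = b := by
    subst hw
    rw [← Fin.append_castAdd_natAdd (f := w)]
    exact hfix _
  obtain ⟨r'', hr''⟩ := hsym.exists_forall_eq_of_hammingDist_le (Fin.castAdd_injective n (2 * s))
    (app3OuterEmb n s).injective hfix' (hd.trans_eq (Fintype.card_fin s).symm)
  exact ⟨r'', fun r' ↦ hr'' _ (app3_comp_app3OuterEmb rh r' r'')⟩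

end

/-- If the honest messages `r` fix the outcome of the symmetric protocol
`proto` to `true` no matter what the last `2s` players send, then `r` belongs to the
`(true, s)`-robust set of the min-max protocol `proto'`. -/
theorem stmt11 {n s : ℕ} (hn : 1 ≤ n) (hs : 1 ≤ s) {M : Type*}
    [Fintype M] [Nonempty M] [DecidableEq M]
    (proto : (Fin (n + 2 * s) → M) → Bool) (hsym : SymmetricProto proto)
    (proto' : (Fin n → M) → Bool)
    (hdef : ∀ r : Fin n → M, proto' r = true ↔
      ∀ r' : Fin s → M, ∃ r'' : Fin s → M, proto (app3 r r' r'') = true)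
    (r : Fin n → M)
    (hfix : ∀ q : Fin (2 * s) → M, proto (Fin.append r q) = true) :
    r ∈ RobustSet proto' true s := by
  intro rh hd
  obtain ⟨r'', hr''⟩ := stmt11_general hsym hfix hd
  exact (hdef rh).2 fun r' ↦ ⟨r'', hr'' r'⟩
end

section
/- Let ε ∈ ℝ with 0 < ε < 1, let M : ℕ → Type be a family of nonempty finite message spaces, let Π : ∀ n, (Fin n → M n) → Bool be a family of symmetric one-round protocols, and let t : ℕ → ℕ be nondecreasing. If for every n ≥ 1 the protocol Π n is ε-secure against t n static rushing corruptions, then there exist constants C > 0 and c ≥ 1 such that for all n ≥ 2, (t n : ℝ) ≤ C · Real.sqrt n · (Real.log n)^c. (Any symmetric one-round coin-flipping protocol can be secure against at most Õ(√n) adaptive corruptions, since adaptive security implies static rushing security.) -/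
/-- `proto` is `ε`-secure against `t` static rushing corruptions: for every set `S` of at
most `t` players and every adversary `A` that only alters the messages of players in `S`,
and whose alterations depend only on the messages of players outside `S`, every outcome
occurs with probability at least `ε` over uniform honest messages. -/
def RushingSecure {ι M : Type*} [Fintype ι] [DecidableEq ι] [Fintype M]
    (proto : (ι → M) → Bool) (t : ℕ) (ε : ℝ) : Prop :=
  ∀ S : Finset ι, S.card ≤ t →
    ∀ A : (ι → M) → (ι → M),
      (∀ r, ∀ i ∉ S, A r i = r i) →
      (∀ r r', (∀ i ∉ S, r i = r' i) → A r = A r') →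
      ∀ b : Bool, ε ≤ Pr (fun r => proto (A r) = b)

open scoped BigOperators

section Pr

variable {α : Type*} [Fintype α] {P Q : α → Prop}

lemma Pr_mono (h : ∀ x, P x → Q x) : Pr P ≤ Pr Q := by
  unfold Pr
  gcongr
  exact h _

lemma exists_of_Pr_pos (hP : 0 < Pr P) : ∃ x, P x := by
  by_contra! h
  simp [Pr, h] at hP

lemma Pr_mul_le_expect {g : α → ℝ} {v : ℝ}
    (hg : ∀ x, 0 ≤ g x) (hv : ∀ x, P x → v ≤ g x) : Pr P * v ≤ 𝔼 x, g x := by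
  classical
  calc Pr P * v = (∑ x with P x, v) / Fintype.card α := by
        rw [Pr, Finset.sum_const, nsmul_eq_mul, div_mul_eq_mul_div]
    _ ≤ (∑ x, g x) / Fintype.card α := by
        gcongr
        calc ∑ x with P x, v ≤ ∑ x with P x, g x :=
              Finset.sum_le_sum fun x hx => hv x (Finset.mem_filter.1 hx).2
          _ ≤ ∑ x, g x :=
              Finset.sum_le_sum_of_subset_of_nonneg (Finset.filter_subset _ _) fun x _ _ => hg x
    _ = 𝔼 x, g x := (Fintype.expect_eq_sum_div_card g).symm

end Pr

section UniformVariance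

variable {α β : Type*} [Fintype α] [Fintype β]

/-- The variance of `f` under the uniform distribution on a finite type, the notion in which
concentration of measure on product spaces is expressed here. It is a finite average rather than
`ProbabilityTheory.variance`, to match the counting definition of `Pr`. -/
noncomputable def uniformVariance (f : α → ℝ) : ℝ :=
  𝔼 x, (f x - 𝔼 y, f y) ^ 2

lemma expect_sub_sq_eq_uniformVariance_add [Nonempty α] (f : α → ℝ) (a : ℝ) :
    𝔼 x, (f x - a) ^ 2 = uniformVariance f + (𝔼 x, f x - a) ^ 2 := by
  set m := 𝔼 x, f x with hm
  calc 𝔼 x, (f x - a) ^ 2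
      = 𝔼 x, ((f x - m) ^ 2 + (f x * (2 * (m - a)) + (a ^ 2 - m ^ 2))) :=
        Finset.expect_congr rfl fun x _ => by ring
    _ = uniformVariance f + (m * (2 * (m - a)) + (a ^ 2 - m ^ 2)) := by
        rw [Finset.expect_add_distrib, Finset.expect_add_distrib, ← Finset.expect_mul,
          Fintype.expect_const, uniformVariance, ← hm]
    _ = uniformVariance f + (m - a) ^ 2 := by ring

/-- Popoviciu's inequality. -/
lemma uniformVariance_le_of_abs_sub_le [Nonempty α] {f : α → ℝ} {c : ℝ}
    (hf : ∀ x y, |f x - f y| ≤ c) : uniformVariance f ≤ c ^ 2 / 4 := by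
  obtain ⟨z, hz⟩ := Finite.exists_min f
  have hmid : ∀ x, (f x - (f z + c / 2)) ^ 2 ≤ c ^ 2 / 4 := fun x => by
    have hx := (le_abs_self _).trans (hf x z)
    nlinarith [hz x]
  calc uniformVariance f
      ≤ 𝔼 x, (f x - (f z + c / 2)) ^ 2 := by
        rw [expect_sub_sq_eq_uniformVariance_add]
        exact le_add_of_nonneg_right (sq_nonneg _)
    _ ≤ c ^ 2 / 4 := Finset.expect_le Finset.univ_nonempty fun x _ => hmid x

lemma uniformVariance_comp_equiv (e : α ≃ β) (f : β → ℝ) :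
    uniformVariance (f ∘ e) = uniformVariance f := by
  have hmean : 𝔼 x, (f ∘ e) x = 𝔼 y, f y := Fintype.expect_equiv e _ _ fun _ => rfl
  exact Fintype.expect_equiv e _ _ fun x => by rw [hmean, Function.comp_apply]

/-- The law of total variance. -/
lemma uniformVariance_prod [Nonempty α] (f : α × β → ℝ) :
    uniformVariance f =
      𝔼 y, uniformVariance (fun x => f (x, y)) + uniformVariance (fun y => 𝔼 x, f (x, y)) := by
  have hexpect : ∀ g : α × β → ℝ, 𝔼 p, g p = 𝔼 y, 𝔼 x, g (x, y) := fun g => by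
    rw [Finset.expect_comm, ← Finset.univ_product_univ, Finset.expect_product]
  rw [uniformVariance, hexpect]
  simp only [expect_sub_sq_eq_uniformVariance_add, Finset.expect_add_distrib]
  rw [hexpect, uniformVariance.eq_def fun y => 𝔼 x, f (x, y)]

lemma mul_sq_sub_le_uniformVariance {P Q : α → Prop} {f : α → ℝ} {ε a b : ℝ}
    (hP : ε ≤ Pr P) (hQ : ε ≤ Pr Q) (hab : a ≤ b)
    (hPa : ∀ x, P x → f x ≤ a) (hQb : ∀ x, Q x → b ≤ f x) :
    ε * ((b - a) ^ 2 / 4) ≤ uniformVariance f := by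
  set m := 𝔼 x, f x
  have hcheb : ∀ R : α → Prop, ε ≤ Pr R → (∀ x, R x → (b - a) ^ 2 / 4 ≤ (f x - m) ^ 2) →
      ε * ((b - a) ^ 2 / 4) ≤ uniformVariance f := fun R hR hdev =>
    (mul_le_mul_of_nonneg_right hR (by positivity)).trans
      (Pr_mul_le_expect (fun _ => sq_nonneg _) hdev)
  rcases le_total ((a + b) / 2) m with hmid | hmid
  · exact hcheb P hP fun x hx => by nlinarith [hPa x hx]
  · exact hcheb Q hQ fun x hx => by nlinarith [hQb x hx]

end UniformVariance

section BoundedDifferences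

variable {ι : Type*} {α : ι → Type*}

/-- `f` has bounded differences `c`: changing coordinate `i` alone changes `f` by at most `c i`.
This is the hypothesis of the concentration inequalities on product spaces. -/
def BoundedDifferences (f : (∀ i, α i) → ℝ) (c : ι → ℝ) : Prop :=
  ∀ i x y, (∀ j ≠ i, x j = y j) → |f x - f y| ≤ c i

lemma BoundedDifferences.comp_piCongrLeft {κ : Type*} {f : (∀ i, α i) → ℝ} {c : ι → ℝ}
    (hf : BoundedDifferences f c) (e : κ ≃ ι) :
    BoundedDifferences (f ∘ e.piCongrLeft α) (c ∘ e) := by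
  intro k x y hxy
  refine hf (e k) _ _ fun j hj => ?_
  obtain ⟨l, rfl⟩ := e.surjective j
  simpa only [Equiv.piCongrLeft_apply_apply] using hxy l (ne_of_apply_ne e hj)

lemma BoundedDifferences.comp_cons {n : ℕ} {α : Fin (n + 1) → Type*} {f : (∀ i, α i) → ℝ}
    {c : Fin (n + 1) → ℝ} (hf : BoundedDifferences f c) (a : α 0) :
    BoundedDifferences (fun y => f (Fin.cons a y)) (Fin.tail c) := by
  refine fun i x y hxy => hf i.succ _ _ fun j hj => ?_
  cases j using Fin.cases with
  | zero => rfl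
  | succ j => exact hxy j (ne_of_apply_ne Fin.succ hj)

lemma BoundedDifferences.expect {κ : Type*} [Fintype κ] [Nonempty κ]
    {f : κ → (∀ i, α i) → ℝ} {c : ι → ℝ} (hf : ∀ k, BoundedDifferences (f k) c) :
    BoundedDifferences (fun x => 𝔼 k, f k x) c := by
  intro i x y hxy
  calc |𝔼 k, f k x - 𝔼 k, f k y| ≤ 𝔼 k, |f k x - f k y| := by
        rw [← Finset.expect_sub_distrib]
        exact Finset.abs_expect_le _ _
    _ ≤ c i := Finset.expect_le Finset.univ_nonempty fun k _ => hf k i x y hxy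

lemma BoundedDifferences.uniformVariance_le_fin {n : ℕ} {α : Fin n → Type*} [∀ i, Fintype (α i)]
    [∀ i, Nonempty (α i)] {f : (∀ i, α i) → ℝ} {c : Fin n → ℝ} (hf : BoundedDifferences f c) :
    uniformVariance f ≤ (∑ i, c i ^ 2) / 4 := by
  induction n with
  | zero => simp [uniformVariance]
  | succ n ih =>
    have hfirst : ∀ y, uniformVariance (fun a => f (Fin.cons a y)) ≤ c 0 ^ 2 / 4 := fun y =>
      uniformVariance_le_of_abs_sub_le fun a b => hf 0 _ _ fun j hj => by
        obtain ⟨k, rfl⟩ := Fin.exists_succ_eq.2 hj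
        rfl
    have hrest : uniformVariance (fun y => 𝔼 a, f (Fin.cons a y)) ≤ (∑ i, Fin.tail c i ^ 2) / 4 :=
      ih (.expect hf.comp_cons)
    calc uniformVariance f
        = uniformVariance (f ∘ Fin.consEquiv α) := (uniformVariance_comp_equiv _ f).symm
      _ = 𝔼 y, uniformVariance (fun a => f (Fin.cons a y)) +
            uniformVariance (fun y => 𝔼 a, f (Fin.cons a y)) := uniformVariance_prod _
      _ ≤ c 0 ^ 2 / 4 + (∑ i, Fin.tail c i ^ 2) / 4 :=
        add_le_add (Finset.expect_le Finset.univ_nonempty fun y _ => hfirst y) hrest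
      _ = (∑ i, c i ^ 2) / 4 := by rw [Fin.sum_univ_succ, add_div]; rfl

/-- The Efron-Stein inequality for bounded differences. -/
theorem BoundedDifferences.uniformVariance_le [Fintype ι] [DecidableEq ι] [∀ i, Fintype (α i)]
    [∀ i, Nonempty (α i)] {f : (∀ i, α i) → ℝ} {c : ι → ℝ} (hf : BoundedDifferences f c) :
    uniformVariance f ≤ (∑ i, c i ^ 2) / 4 := by
  let e := (Fintype.equivFin ι).symm
  rw [← uniformVariance_comp_equiv (e.piCongrLeft α) f, ← e.sum_comp]
  exact (hf.comp_piCongrLeft e).uniformVariance_le_fin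

end BoundedDifferences

section Concentration

variable {ι : Type*} [Fintype ι] {α : ι → Type*}

lemma hammingDist_le_one_of_forall_ne [∀ i, DecidableEq (α i)] {x y : ∀ i, α i} {i : ι}
    (hxy : ∀ j ≠ i, x j = y j) : hammingDist x y ≤ 1 := by
  refine (Finset.card_le_card (t := {i}) fun j hj => ?_).trans_eq (Finset.card_singleton i)
  exact Finset.mem_singleton.2 (not_imp_comm.1 (hxy j) (Finset.mem_filter.1 hj).2)

lemma boundedDifferences_infDist [∀ i, DecidableEq (α i)] (s : Set (Hamming α)) :
    BoundedDifferences (fun x => Metric.infDist (Hamming.toHamming x) s) 1 := by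
  intro i x y hxy
  calc |Metric.infDist (Hamming.toHamming x) s - Metric.infDist (Hamming.toHamming y) s|
      ≤ dist (Hamming.toHamming x) (Hamming.toHamming y) :=
        (Metric.lipschitz_infDist_pt s).dist_le_mul _ _ |>.trans_eq (one_mul _)
    _ ≤ 1 := by
        rw [Hamming.dist_eq_hammingDist]
        exact_mod_cast hammingDist_le_one_of_forall_ne hxy

theorem exists_hammingDist_le_of_le_Pr [DecidableEq ι] [∀ i, Fintype (α i)] [∀ i, Nonempty (α i)]
    [∀ i, DecidableEq (α i)] {P Q : (∀ i, α i) → Prop} {ε : ℝ} (hε : 0 < ε)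
    (hP : ε ≤ Pr P) (hQ : ε ≤ Pr Q) :
    ∃ x y, P x ∧ Q y ∧ (hammingDist x y : ℝ) ≤ √(Fintype.card ι / ε) := by
  obtain ⟨x₀, hx₀⟩ := exists_of_Pr_pos (hε.trans_le hP)
  let s : Set (Hamming α) := {x | P (Hamming.ofHamming x)}
  let d : (∀ i, α i) → ℝ := fun y => Metric.infDist (Hamming.toHamming y) s
  have hdP : ∀ x, P x → d x ≤ 0 := fun x hx =>
    (Metric.infDist_zero_of_mem (s := s) (x := Hamming.toHamming x) hx).le
  obtain ⟨y, hy, hmin⟩ : ∃ y, Q y ∧ ∀ z, Q z → d y ≤ d z :=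
    Set.exists_min_image {y | Q y} d (Set.toFinite _) (exists_of_Pr_pos (hε.trans_le hQ))
  have hvar : ε * ((d y - 0) ^ 2 / 4) ≤ Fintype.card ι / 4 :=
    calc ε * ((d y - 0) ^ 2 / 4) ≤ uniformVariance d :=
          mul_sq_sub_le_uniformVariance hP hQ Metric.infDist_nonneg hdP hmin
      _ ≤ Fintype.card ι / 4 := by simpa using (boundedDifferences_infDist s).uniformVariance_le
  have hdy : d y ≤ √(Fintype.card ι / ε) := by
    apply Real.le_sqrt_of_sq_le
    rw [le_div_iff₀ hε]
    linarith
  obtain ⟨x, hx, hxy⟩ :=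
    s.toFinite.isCompact.exists_infDist_eq_dist ⟨Hamming.toHamming x₀, hx₀⟩ (Hamming.toHamming y)
  refine ⟨Hamming.ofHamming x, y, hx, hy, ?_⟩
  rw [hammingDist_comm]
  exact hxy.symm.trans_le hdy

end Concentration

section Forces

variable {ι M : Type*} {proto : (ι → M) → Bool} {S : Finset ι}

/-- `Forces proto S b r`: if the players outside `S` send the messages in `r`, the outcome is `b`
whatever the players in `S` send. These are the vectors on which corrupting `S` cannot avoid `b`. -/
def Forces (proto : (ι → M) → Bool) (S : Finset ι) (b : Bool) (r : ι → M) : Prop :=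
  ∀ s : ι → M, (∀ i ∉ S, s i = r i) → proto s = b

theorem RushingSecure.le_Pr_forces [Fintype ι] [DecidableEq ι] [Fintype M] [Nonempty M]
    {t : ℕ} {ε : ℝ} (h : RushingSecure proto t ε) (hS : S.card ≤ t) (b : Bool) :
    ε ≤ Pr (Forces proto S b) := by
  -- If no `a` avoids `b`, `epsilon` returns some arbitrary vector, which does no harm.
  let attack : (ι → M) → ι → M := fun r =>
    Classical.epsilon fun a => proto (S.piecewise a r) ≠ b
  have hfix : ∀ r, ∀ i ∉ S, S.piecewise (attack r) r i = r i := fun r i hi =>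
    S.piecewise_eq_of_notMem _ _ hi
  have hrushing : ∀ r r', (∀ i ∉ S, r i = r' i) →
      S.piecewise (attack r) r = S.piecewise (attack r') r' := by
    intro r r' hr
    have hpw : ∀ a, S.piecewise a r = S.piecewise a r' := fun a =>
      S.piecewise_congr (fun _ _ => rfl) hr
    simp only [attack, hpw]
  refine (h S hS (fun r => S.piecewise (attack r) r) hfix hrushing b).trans (Pr_mono ?_)
  intro r hr s hs
  by_contra hsb
  have hpw : S.piecewise s r = s := by
    rw [S.piecewise_congr (fun _ _ => rfl) fun i hi => (hs i hi).symm, S.piecewise_same]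
  exact Classical.epsilon_spec (p := fun a => proto (S.piecewise a r) ≠ b) ⟨s, by rwa [hpw]⟩ hr

lemma exists_perm_mem_of_card_le [Finite ι] {D : Finset ι} (hDS : Disjoint D S)
    (hcard : D.card ≤ S.card) :
    ∃ σ : Equiv.Perm ι, (∀ i ∈ D, σ i ∈ S) ∧ ∀ i ∉ S, i ∉ D → σ i = i := by
  classical
  have := Fintype.ofFinite ι
  obtain ⟨e⟩ : Nonempty (D ↪ S) := Function.Embedding.nonempty_of_card_le (by simpa using hcard)
  let f : ι → ι := fun i => if h : i ∈ D then e ⟨i, h⟩ else i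
  have hfD : ∀ i (h : i ∈ D), f i = e ⟨i, h⟩ := fun i h => dif_pos h
  have hfS : ∀ i ∈ D, f i ∈ S := fun i h => hfD i h ▸ (e ⟨i, h⟩).2
  have hf : ∀ i ∉ D, f i = i := fun i h => dif_neg h
  have hinj : Set.InjOn f (Sᶜ : Finset ι) := by
    intro i hi j hj hij
    rw [Finset.mem_coe, Finset.mem_compl] at hi hj
    by_cases hiD : i ∈ D <;> by_cases hjD : j ∈ D
    · rw [hfD i hiD, hfD j hjD] at hij
      exact congrArg Subtype.val (e.injective (Subtype.ext hij))
    · exact absurd (hf j hjD ▸ hij ▸ hfS i hiD) hj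
    · exact absurd (hf i hiD ▸ hij ▸ hfS j hjD) hi
    · rwa [hf i hiD, hf j hjD] at hij
  obtain ⟨σ, hσ⟩ := Finset.exists_equiv_extend_of_card_eq (Finset.card_univ (α := ι)).symm
    (Finset.subset_univ _) hinj
  have hσf : ∀ i ∉ S, (σ i : ι) = f i := fun i hi => hσ i (Finset.mem_compl.2 hi)
  refine ⟨σ.trans (Equiv.subtypeUnivEquiv Finset.mem_univ), fun i hi => ?_, fun i hiS hiD => ?_⟩
  · simp [hσf i (Finset.disjoint_left.1 hDS hi), hfS i hi]
  · simp [hσf i hiS, hf i hiD]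

theorem Forces.card_lt_hammingDist [Fintype ι] [DecidableEq M] (hsym : SymmetricProto proto)
    {r r' : ι → M} {b b' : Bool} (hbb' : b ≠ b') (hr : Forces proto S b r)
    (hr' : Forces proto S b' r') : S.card < hammingDist r r' := by
  classical
  by_contra! hle
  let D : Finset ι := {i | i ∉ S ∧ r i ≠ r' i}
  have hDcard : D.card ≤ S.card :=
    (Finset.card_le_card (Finset.monotone_filter_right _ fun _ _ => And.right)).trans hle
  obtain ⟨σ, hσD, hσ⟩ := exists_perm_mem_of_card_le (D := D) (S := S)
    (Finset.disjoint_left.2 fun i hi => (Finset.mem_filter.1 hi).2.1) hDcard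
  let s := S.piecewise (r' ∘ σ.symm) r
  have hs : ∀ i ∉ S, s i = r i := fun i hi => S.piecewise_eq_of_notMem _ _ hi
  have hsσ : ∀ i ∉ S, (s ∘ σ) i = r' i := by
    intro i hi
    by_cases hiD : i ∈ D
    · simp [s, hσD i hiD]
    · have heq : r i = r' i := by simpa [D, hi] using hiD
      rw [Function.comp_apply, hσ i hi hiD, hs i hi, heq]
  apply hbb'
  calc b = proto s := (hr s hs).symm
    _ = proto (s ∘ σ) := (hsym σ s).symm
    _ = b' := hr' _ hsσ

end Forces

theorem stmt13_general {ι M : Type*} [Fintype ι] [DecidableEq ι] [Fintype M] [Nonempty M]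
    {proto : (ι → M) → Bool} {t : ℕ} {ε : ℝ} (hε : 0 < ε) (hsym : SymmetricProto proto)
    (h : RushingSecure proto t ε) : (t : ℝ) ≤ √(Fintype.card ι / ε) := by
  classical
  obtain ⟨S, -, hS⟩ := Finset.exists_subset_card_eq
    (s := (Finset.univ : Finset ι)) (min_le_right t (Fintype.card ι))
  have hSt : S.card ≤ t := hS.trans_le (min_le_left _ _)
  obtain ⟨x, y, hx, hy, hxy⟩ :=
    exists_hammingDist_le_of_le_Pr hε (h.le_Pr_forces hSt false) (h.le_Pr_forces hSt true)
  have hlt := hx.card_lt_hammingDist hsym Bool.false_ne_true hy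
  have hxn : hammingDist x y ≤ Fintype.card ι := hammingDist_le_card_fintype
  calc (t : ℝ) ≤ hammingDist x y := by exact_mod_cast (by omega : t ≤ hammingDist x y)
    _ ≤ √(Fintype.card ι / ε) := hxy

lemma sqrt_div_le_mul_log {n : ℕ} (hn : 2 ≤ n) (ε : ℝ) :
    √(n / ε) ≤ 1 / (√ε * Real.log 2) * √n * Real.log n := by
  have hlog2 : 0 < Real.log 2 := Real.log_pos one_lt_two
  calc √(n / ε) = 1 / (√ε * Real.log 2) * √n * Real.log 2 := by
        rw [Real.sqrt_div n.cast_nonneg]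
        field_simp
    _ ≤ 1 / (√ε * Real.log 2) * √n * Real.log n := by
        gcongr
        exact_mod_cast hn

/-- Any family of symmetric one-round protocols that is `ε`-secure against
`t n` static rushing corruptions (with `t` nondecreasing) satisfies
`t n ≤ C·√n·(log n)^c` for some constants `C > 0`, `c ≥ 1`. -/
theorem stmt13 {ε : ℝ} (hε0 : 0 < ε) (hε1 : ε < 1)
    (M : ℕ → Type) [∀ n, Fintype (M n)] [∀ n, Nonempty (M n)] [∀ n, DecidableEq (M n)]
    (proto : ∀ n, (Fin n → M n) → Bool) (t : ℕ → ℕ) (hmono : Monotone t)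
    (hsym : ∀ n, SymmetricProto (proto n))
    (h : ∀ n, 1 ≤ n → RushingSecure (proto n) (t n) ε) :
    ∃ C c : ℝ, 0 < C ∧ 1 ≤ c ∧ ∀ n : ℕ, 2 ≤ n →
      (t n : ℝ) ≤ C * Real.sqrt n * Real.log n ^ c := by
  refine ⟨1 / (√ε * Real.log 2), 1, by positivity, le_rfl, fun n hn => ?_⟩
  have hbound := stmt13_general hε0 (hsym n) (h n (one_le_two.trans hn))
  rw [Fintype.card_fin] at hbound
  simpa only [Real.rpow_one] using hbound.trans (sqrt_div_le_mul_log hn ε)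
end
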